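/- Let h : ℝⁿ → [0,∞) be continuous with ∫_{ℝⁿ} h(x) dx < ∞ and lim_{R→∞} ∫_{|x| > R} h(x) dx = 0. Let (P_k) be a sequence of Borel probability measures on ℝⁿ, each absolutely continuous with respect to Lebesgue measure with density f_k satisfying f_k ≤ h almost everywhere, and suppose P_k converges weakly to a Borel probability measure P on ℝⁿ. Then P is absolutely continuous with respect to Lebesgue measure and its density f satisfies f ≤ h almost everywhere. -/

import Mathlib

/-!
Weak convergence preserves total mass and makes the measure of a closed set upper semicontinuous, so
a bound `P i U ≤ c` on an open set `U` survives in the limit. Hence a weak limit of measures bounded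
by `ν` is at most `ν` on open sets, and on all sets when `ν` is outer regular. For `ν` the measure
with density `h`, which is finite and therefore outer regular, being bounded by `ν` is the same as
having a density that is almost everywhere at most `h`.
-/

open MeasureTheory Real Set Filter Topology
open scoped ENNReal

noncomputable section

section DominatedMeasures

variable {X : Type*} [MeasurableSpace X]

lemma rnDeriv_ae_le_of_le_withDensity {μ ν : Measure X} [SigmaFinite μ] {h : X → ℝ≥0∞}
    (hν : ν ≤ μ.withDensity h) : ν.rnDeriv μ ≤ᵐ[μ] h := by
  refine ae_le_of_forall_setLIntegral_le_of_sigmaFinite (Measure.measurable_rnDeriv ν μ)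
    fun s hs _ ↦ ?_
  calc ∫⁻ x in s, ν.rnDeriv μ x ∂μ
      ≤ ν s := Measure.setLIntegral_rnDeriv_le s
    _ ≤ μ.withDensity h s := hν s
    _ = ∫⁻ x in s, h x ∂μ := withDensity_apply h hs

lemma measure_le_of_forall_isOpen_le [TopologicalSpace X] {μ ν : Measure X} [ν.OuterRegular]
    (hopen : ∀ U, IsOpen U → μ U ≤ ν U) : μ ≤ ν := by
  refine Measure.le_iff'.mpr fun A ↦ ?_
  rw [A.measure_eq_iInf_isOpen ν]
  exact le_iInf₂ fun U hAU ↦ le_iInf fun hU ↦ (measure_mono hAU).trans (hopen U hU)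

end DominatedMeasures

section WeakLimits

variable {X ι : Type*} [MeasurableSpace X] [TopologicalSpace X] [OpensMeasurableSpace X]
  [HasOuterApproxClosed X] {L : Filter ι} [L.NeBot] {P : ι → FiniteMeasure X} {P₀ : FiniteMeasure X}

lemma measure_isOpen_le_of_tendsto_of_eventually_le (hP : Tendsto P L (𝓝 P₀)) {U : Set X}
    (hU : IsOpen U) {c : ℝ≥0∞} (hc : ∀ᶠ i in L, (P i : Measure X) U ≤ c) :
    (P₀ : Measure X) U ≤ c := by
  have hmass : Tendsto (fun i ↦ (P i : Measure X) univ) L (𝓝 ((P₀ : Measure X) univ)) := by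
    simpa only [FiniteMeasure.ennreal_mass] using ENNReal.tendsto_coe.mpr hP.mass
  have hsplit : ∀ᶠ i in L, (P i : Measure X) univ ≤ (P i : Measure X) Uᶜ + c := by
    filter_upwards [hc] with i hi
    rw [← measure_add_measure_compl hU.measurableSet, add_comm]
    gcongr
  refine ENNReal.le_of_add_le_add_left (measure_ne_top (P₀ : Measure X) Uᶜ) ?_
  calc (P₀ : Measure X) Uᶜ + (P₀ : Measure X) U
      = (P₀ : Measure X) univ := by rw [add_comm, measure_add_measure_compl hU.measurableSet]
    _ = L.limsup fun i ↦ (P i : Measure X) univ := hmass.limsup_eq.symm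
    _ ≤ L.limsup fun i ↦ (P i : Measure X) Uᶜ + c := limsup_le_limsup hsplit
    _ = (L.limsup fun i ↦ (P i : Measure X) Uᶜ) + c :=
        limsup_add_const L _ c isBounded_le_of_top isCobounded_le_of_bot
    _ ≤ (P₀ : Measure X) Uᶜ + c := by
        gcongr
        exact FiniteMeasure.limsup_measure_closed_le_of_tendsto hP hU.isClosed_compl

lemma finiteMeasure_le_of_tendsto_of_eventually_le {ν : Measure X} [ν.OuterRegular]
    (hP : Tendsto P L (𝓝 P₀)) (hν : ∀ᶠ i in L, (P i : Measure X) ≤ ν) :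
    (P₀ : Measure X) ≤ ν :=
  measure_le_of_forall_isOpen_le fun U hU ↦
    measure_isOpen_le_of_tendsto_of_eventually_le hP hU (hν.mono fun _ hi ↦ hi U)

theorem weak_limit_density_bounded_general {μ : Measure X} [SigmaFinite μ]
    {h : X → ℝ≥0∞} [(μ.withDensity h).OuterRegular] (hP : Tendsto P L (𝓝 P₀))
    (hdens : ∀ᶠ i in L, ∃ f, (P i : Measure X) = μ.withDensity f ∧ f ≤ᵐ[μ] h) :
    (P₀ : Measure X) ≪ μ ∧ (P₀ : Measure X).rnDeriv μ ≤ᵐ[μ] h := by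
  have hle : (P₀ : Measure X) ≤ μ.withDensity h := by
    refine finiteMeasure_le_of_tendsto_of_eventually_le hP (hdens.mono ?_)
    rintro i ⟨f, hf, hfh⟩
    exact hf ▸ withDensity_mono hfh
  exact ⟨(Measure.absolutelyContinuous_of_le hle).trans (withDensity_absolutelyContinuous μ h),
    rnDeriv_ae_le_of_le_withDensity hle⟩

end WeakLimits

/-- Let `h : ℝⁿ → [0,∞)` be continuous, integrable, with vanishing tails.
If `(P_k)` are Borel probability measures on `ℝⁿ`, each absolutely continuous with density
bounded a.e. by `h`, and `P_k → P` weakly for a Borel probability measure `P`, then `P` is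
absolutely continuous with respect to Lebesgue measure and its density is a.e. bounded by `h`. -/
theorem weak_limit_density_bounded
    (n : ℕ) (h : EuclideanSpace ℝ (Fin n) → ℝ)
    (hcont : Continuous h) (hpos : ∀ x, 0 ≤ h x)
    (hint : Integrable h volume)
    (htail : Tendsto (fun R : ℝ => ∫ x in {x : EuclideanSpace ℝ (Fin n) | R < ‖x‖}, h x)
        atTop (nhds 0))
    (P : ℕ → Measure (EuclideanSpace ℝ (Fin n)))
    (hP : ∀ k, IsProbabilityMeasure (P k))
    (hdens : ∀ k, ∃ f : EuclideanSpace ℝ (Fin n) → ℝ, Measurable f ∧ (∀ x, 0 ≤ f x) ∧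
        P k = volume.withDensity (fun x => ENNReal.ofReal (f x)) ∧
        ∀ᵐ x ∂volume, f x ≤ h x)
    (Plim : Measure (EuclideanSpace ℝ (Fin n)))
    (hPlim : IsProbabilityMeasure Plim)
    (hweak : ∀ g : BoundedContinuousFunction (EuclideanSpace ℝ (Fin n)) ℝ,
        Tendsto (fun k => ∫ x, g x ∂(P k)) atTop (nhds (∫ x, g x ∂Plim))) :
    Plim ≪ volume ∧
    ∀ᵐ x ∂volume, Plim.rnDeriv volume x ≤ ENNReal.ofReal (h x) := by
  have := isFiniteMeasure_withDensity_ofReal hint.hasFiniteIntegral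
  refine weak_limit_density_bounded_general (L := atTop) (P := fun k ↦ ⟨P k, inferInstance⟩)
    (P₀ := ⟨Plim, inferInstance⟩) (FiniteMeasure.tendsto_iff_forall_integral_tendsto.mpr hweak)
    (Eventually.of_forall fun k ↦ ?_)
  obtain ⟨f, -, -, hPf, hfh⟩ := hdens k
  exact ⟨_, hPf, hfh.mono fun _ hx ↦ ENNReal.ofReal_le_ofReal hx⟩
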